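/- Let ρ>0, ρ̃>0 with ρ≠ρ̃, G>0, P₀>0 and k̂₀∈ℝ with N := k̂₀(ρ−ρ̃) − ρ < 0; set P(t) := √(P₀² − 2G·P₀·N·t + ρρ̃G²t²) and k̂(t) := (ρ − P′(t)/G)/(ρ−ρ̃). Then k̂(t) → √ρ/(√ρ + √ρ̃) as t → +∞. -/

import Mathlib

/-- `Q(t) = P₀² − 2GP₀Nt + ρρ̃G²t²`, the square of the shock mass (formula (34)). -/
noncomputable def Qf (ρ ρt G P₀ N t : ℝ) : ℝ :=
  P₀ ^ 2 - 2 * G * P₀ * N * t + ρ * ρt * G ^ 2 * t ^ 2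

/-- `P(t) = √Q(t)`, the shock mass (formula (34)). -/
noncomputable def Pf (ρ ρt G P₀ N : ℝ) : ℝ → ℝ :=
  fun t => Real.sqrt (Qf ρ ρt G P₀ N t)

/-- `k̂(t) = (ρ − P′(t)/G)/(ρ − ρ̃)`, the normalized momentum coefficient. -/
noncomputable def khatf (ρ ρt G P₀ N : ℝ) : ℝ → ℝ :=
  fun t => (ρ - deriv (Pf ρ ρt G P₀ N) t / G) / (ρ - ρt)

/-!
For large `t` the quadratic `q(t) = a t² + b t + c` with `a > 0` is positive, so `√q` has derivative
`q'(t) / (2 √q(t))`. Since `q(t) / t² → a`, dividing numerator and denominator by `t` shows that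
this derivative tends to `a / √a = √a`. For the shock mass `a = ρ ρ̃ G²`, hence `P' / G → √(ρ ρ̃)`,
and in the limit `(ρ - √(ρ ρ̃)) / (ρ - ρ̃)` of `k̂` the common factor `√ρ - √ρ̃` cancels.
-/

open Filter Topology

section Quadratic

variable (a b c : ℝ)

lemma tendsto_quadratic_div_sq_atTop :
    Tendsto (fun t : ℝ => (a * t ^ 2 + b * t + c) / t ^ 2) atTop (𝓝 a) := by
  have hinv : Tendsto (fun t : ℝ => t⁻¹) atTop (𝓝 0) := tendsto_inv_atTop_zero
  have hlim : Tendsto (fun t : ℝ => a + b * t⁻¹ + c * t⁻¹ ^ 2) atTop (𝓝 a) := by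
    simpa using ((hinv.const_mul b).const_add a).add ((hinv.pow 2).const_mul c)
  refine hlim.congr' ?_
  filter_upwards [eventually_ne_atTop 0] with t ht
  field_simp

lemma tendsto_sqrt_quadratic_div_atTop :
    Tendsto (fun t : ℝ => √(a * t ^ 2 + b * t + c) / t) atTop (𝓝 √a) := by
  refine (tendsto_quadratic_div_sq_atTop a b c).sqrt.congr' ?_
  filter_upwards [eventually_ge_atTop 0] with t ht
  rw [Real.sqrt_div' _ (sq_nonneg t), Real.sqrt_sq ht]

variable {a}

lemma eventually_quadratic_pos_atTop (ha : 0 < a) :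
    ∀ᶠ t : ℝ in atTop, 0 < a * t ^ 2 + b * t + c := by
  filter_upwards [(tendsto_quadratic_div_sq_atTop a b c).eventually_const_lt ha,
    eventually_gt_atTop 0] with t hquot ht
  exact (div_pos_iff_of_pos_right (pow_pos ht 2)).mp hquot

variable {b c} in
lemma hasDerivAt_sqrt_quadratic {t : ℝ} (hne : a * t ^ 2 + b * t + c ≠ 0) :
    HasDerivAt (fun t : ℝ => √(a * t ^ 2 + b * t + c))
      ((2 * a * t + b) / (2 * √(a * t ^ 2 + b * t + c))) t := by
  have hquad : HasDerivAt (fun t : ℝ => a * t ^ 2 + b * t + c) (2 * a * t + b) t := by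
    have hsq : HasDerivAt (fun t : ℝ => a * t ^ 2) (a * (2 * t)) t := by
      simpa using (hasDerivAt_pow 2 t).const_mul a
    exact ((hsq.fun_add (hasDerivAt_const_mul b)).add_const c).congr_deriv (by ring)
  exact hquad.sqrt hne

theorem tendsto_deriv_sqrt_quadratic_atTop (ha : 0 < a) :
    Tendsto (deriv fun t : ℝ => √(a * t ^ 2 + b * t + c)) atTop (𝓝 √a) := by
  have hnum : Tendsto (fun t : ℝ => a + b / 2 * t⁻¹) atTop (𝓝 a) := by
    simpa using (tendsto_inv_atTop_zero.const_mul (b / 2)).const_add a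
  have hlim : Tendsto (fun t : ℝ => (a + b / 2 * t⁻¹) / (√(a * t ^ 2 + b * t + c) / t))
      atTop (𝓝 √a) := by
    simpa only [Pi.div_def, Real.div_sqrt] using
      hnum.div (tendsto_sqrt_quadratic_div_atTop a b c) (Real.sqrt_pos.mpr ha).ne'
  refine hlim.congr' ?_
  filter_upwards [eventually_quadratic_pos_atTop b c ha, eventually_ne_atTop 0] with t hpos ht
  rw [(hasDerivAt_sqrt_quadratic hpos.ne').deriv]
  field_simp

end Quadratic

lemma sub_sqrt_mul_div_sub_eq {x y : ℝ} (hx : 0 ≤ x) (hy : 0 ≤ y) (hne : x ≠ y) :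
    (x - √(x * y)) / (x - y) = √x / (√x + √y) := by
  have hsub : √x - √y ≠ 0 := sub_ne_zero.mpr fun h => hne ((Real.sqrt_inj hx hy).mp h)
  calc (x - √(x * y)) / (x - y)
      = (√x * (√x - √y)) / ((√x + √y) * (√x - √y)) := by
        rw [Real.sqrt_mul hx, ← sq_sub_sq, Real.sq_sqrt hx, Real.sq_sqrt hy, mul_sub,
          Real.mul_self_sqrt hx]
    _ = √x / (√x + √y) := mul_div_mul_right _ _ hsub

lemma tendsto_deriv_Pf_atTop {ρ ρt G : ℝ} (hρρt : 0 < ρ * ρt) (hG : 0 < G) (P₀ N : ℝ) :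
    Tendsto (deriv (Pf ρ ρt G P₀ N)) atTop (𝓝 (√(ρ * ρt) * G)) := by
  have hPf : Pf ρ ρt G P₀ N =
      fun t => √(ρ * ρt * G ^ 2 * t ^ 2 + -(2 * G * P₀ * N) * t + P₀ ^ 2) := by
    funext t
    rw [Pf, Qf]
    ring_nf
  have hsqrt : √(ρ * ρt * G ^ 2) = √(ρ * ρt) * G := by
    rw [Real.sqrt_mul hρρt.le, Real.sqrt_sq hG.le]
  rw [hPf, ← hsqrt]
  exact tendsto_deriv_sqrt_quadratic_atTop _ _ (by positivity)

theorem stmt_11_general {ρ ρt G : ℝ} (hρ : 0 < ρ) (hρt : 0 < ρt) (hne : ρ ≠ ρt) (hG : 0 < G)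
    (P₀ N : ℝ) :
    Tendsto (khatf ρ ρt G P₀ N) atTop (𝓝 (√ρ / (√ρ + √ρt))) := by
  have hslope : Tendsto (fun t => deriv (Pf ρ ρt G P₀ N) t / G) atTop (𝓝 √(ρ * ρt)) := by
    simpa only [mul_div_cancel_right₀ _ hG.ne'] using
      (tendsto_deriv_Pf_atTop (mul_pos hρ hρt) hG P₀ N).div_const G
  rw [← sub_sqrt_mul_div_sub_eq hρ.le hρt.le hne]
  exact (hslope.const_sub ρ).div_const (ρ - ρt)

/-- Asymptotics in Theorem 5.1: `k̂(t) → √ρ/(√ρ + √ρ̃)` as `t → +∞` (formula (37)). -/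
theorem stmt_11 (ρ ρt G P₀ khat₀ N : ℝ)
    (hρ : 0 < ρ) (hρt : 0 < ρt) (hne : ρ ≠ ρt) (hG : 0 < G) (hP₀ : 0 < P₀)
    (hN : N = khat₀ * (ρ - ρt) - ρ) (hNneg : N < 0) :
    Filter.Tendsto (khatf ρ ρt G P₀ N) Filter.atTop
      (nhds (Real.sqrt ρ / (Real.sqrt ρ + Real.sqrt ρt))) :=
  stmt_11_general hρ hρt hne hG P₀ N
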